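/- arXiv:1108.6218 — 3 statements merged into one kernel-verified Lean document; each statement's English description precedes it below -/
import Mathlib

section
/- The map sending an affine rational point (x, y) of E_m to α = −x²/(2y) + (x/y)ω + (1/y)ω² is a bijection from the set of affine rational points of E_m (i.e. pairs (x,y) ∈ ℚ² with y² = x³ − m) onto the set S_m = {α ∈ K^× : α² = a − ω for some a ∈ ℚ}. -/
/-!
In the basis `1, ω, ω²` of `K`, the square of `A + Bω + Cω²` is
`(A² + 2mBC) + (2AB + mC²)ω + (B² + 2AC)ω²`, so it has the form `a - ω` exactly when
`2AB + mC² = -1` and `B² + 2AC = 0`. These equations force `C ≠ 0`, hence `A = -B² / (2C)`, and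
substituting this into the first one shows that `(B / C, 1 / C)` lies on `y² = x³ - m`. Conversely,
a point `(x, y)` of that curve has `y ≠ 0`, because `m` is not a cube, and comes from
`(A, B, C) = (-x² / (2y), x / y, 1 / y)`.
-/

theorem exists_pow_eq_of_pow_eq_algebraMap {R L : Type*} [CommRing R] [IsIntegrallyClosed R]
    [CommRing L] [Algebra R L] [IsFractionRing R L] {n : ℕ} (hn : 0 < n) {r : R} {x : L}
    (hx : x ^ n = algebraMap R L r) : ∃ k : R, k ^ n = r := by
  have x_pow_integral : IsIntegral R (x ^ n) := hx ▸ isIntegral_algebraMap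
  obtain ⟨k, rfl⟩ := IsIntegrallyClosed.exists_algebraMap_eq_of_isIntegral_pow hn x_pow_integral
  exact ⟨k, IsFractionRing.injective R L (by rw [map_pow, hx])⟩

section PowCombination

variable {R A : Type*} [CommSemiring R] [Semiring A] [Algebra R A]

variable (R) in
/-- The linear map sending `v` to `∑ i, v i * ω ^ i`, the element with coordinates `v` in the powers
of `ω` below `ω ^ n`. -/
def powCombination (n : ℕ) (ω : A) : (Fin n → R) →ₗ[R] A :=
  Fintype.linearCombination R fun i : Fin n => ω ^ (i : ℕ)

theorem powCombination_three_apply (ω : A) (v : Fin 3 → R) :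
    powCombination R 3 ω v =
      algebraMap R A (v 0) + algebraMap R A (v 1) * ω + algebraMap R A (v 2) * ω ^ 2 := by
  simp [powCombination, Fintype.linearCombination_apply, Fin.sum_univ_three, Algebra.smul_def]

end PowCombination

section PrimeDegree

variable {F K : Type*} [Field F] [Ring K] [Algebra F K] {p : ℕ} {m : F} {ω : K}

theorem natDegree_minpoly_of_pow_prime_eq [Nontrivial K] (hp : p.Prime) (hm : ∀ b : F, b ^ p ≠ m)
    (hω : ω ^ p = algebraMap F K m) : (minpoly F ω).natDegree = p := by
  rw [← minpoly.eq_of_irreducible_of_monic (X_pow_sub_C_irreducible_of_prime hp hm)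
    (by simp [hω]) (Polynomial.monic_X_pow_sub_C m hp.ne_zero), Polynomial.natDegree_X_pow_sub_C]

theorem powCombination_natDegree_minpoly_injective (ω : K) :
    Function.Injective (powCombination F (minpoly F ω).natDegree ω) :=
  (linearIndependent_pow ω).fintypeLinearCombination_injective

theorem powCombination_bijective_of_pow_prime_eq (hp : p.Prime) (hm : ∀ b : F, b ^ p ≠ m)
    (hω : ω ^ p = algebraMap F K m) (hK : Module.finrank F K = p) :
    Function.Bijective (powCombination F p ω) := by
  have finrank_pos : 0 < Module.finrank F K := hK ▸ hp.pos
  have := Module.nontrivial_of_finrank_pos finrank_pos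
  have := Module.finite_of_finrank_pos finrank_pos
  have inj : Function.Injective (powCombination F p ω) :=
    natDegree_minpoly_of_pow_prime_eq hp hm hω ▸ powCombination_natDegree_minpoly_injective ω
  have finrank_eq : Module.finrank F (Fin p → F) = Module.finrank F K := by simp [hK]
  exact ⟨inj, (LinearMap.injective_iff_surjective_of_finrank_eq_finrank finrank_eq).mp inj⟩

end PrimeDegree

section BinomialSquares

variable {R A : Type*} [CommRing R] [CommRing A] [Algebra R A] {m : R} {ω : A}

/-- The coordinates `(A, B, C)` of those `A + Bω + Cω²`, with `ω³ = m`, whose square has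
`ω`-coordinate `-1` and `ω²`-coordinate `0`. -/
def binomialSquareCoords (m : R) : Set (Fin 3 → R) :=
  {v | 2 * v 0 * v 1 + m * v 2 ^ 2 = -1 ∧ v 1 ^ 2 + 2 * v 0 * v 2 = 0}

theorem apply_two_ne_zero_of_mem_binomialSquareCoords [Nontrivial R] [IsReduced R] {v : Fin 3 → R}
    (hv : v ∈ binomialSquareCoords m) : v 2 ≠ 0 := by
  obtain ⟨omega_coord, omega_sq_coord⟩ := hv
  intro hC
  have hB : v 1 = 0 := by simpa [hC] using omega_sq_coord
  simp [hB, hC] at omega_coord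

theorem zero_notMem_binomialSquareCoords [Nontrivial R] (m : R) : 0 ∉ binomialSquareCoords m := by
  simp [binomialSquareCoords]

theorem powCombination_three_sq (hω : ω ^ 3 = algebraMap R A m) (v : Fin 3 → R) :
    powCombination R 3 ω v ^ 2 = powCombination R 3 ω
      ![v 0 ^ 2 + 2 * m * v 1 * v 2, 2 * v 0 * v 1 + m * v 2 ^ 2, v 1 ^ 2 + 2 * v 0 * v 2] := by
  simp only [powCombination_three_apply, Matrix.cons_val, map_add, map_mul, map_pow, map_ofNat,
    ← hω]
  ring

theorem powCombination_three_binomial (ω : A) (a : R) :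
    powCombination R 3 ω ![a, -1, 0] = algebraMap R A a - ω := by
  simp [powCombination_three_apply, sub_eq_add_neg]

theorem exists_powCombination_sq_eq_sub_iff (hω : ω ^ 3 = algebraMap R A m)
    (hinj : Function.Injective (powCombination R 3 ω)) (v : Fin 3 → R) :
    (∃ a : R, powCombination R 3 ω v ^ 2 = algebraMap R A a - ω) ↔ v ∈ binomialSquareCoords m := by
  simp [powCombination_three_sq hω, ← powCombination_three_binomial, hinj.eq_iff,
    binomialSquareCoords]

theorem bijOn_powCombination_binomialSquareCoords [Nontrivial R] (hω : ω ^ 3 = algebraMap R A m)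
    (hbij : Function.Bijective (powCombination R 3 ω)) :
    Set.BijOn (powCombination R 3 ω) (binomialSquareCoords m)
      {α : A | α ≠ 0 ∧ ∃ a : R, α ^ 2 = algebraMap R A a - ω} := by
  refine (Equiv.ofBijective _ hbij).bijOn fun v => ?_
  have ne_zero (hv : v ∈ binomialSquareCoords m) : powCombination R 3 ω v ≠ 0 := by
    rw [Ne, map_eq_zero_iff _ hbij.injective]
    exact ne_of_mem_of_not_mem hv (zero_notMem_binomialSquareCoords m)
  simpa [exists_powCombination_sq_eq_sub_iff hω hbij.injective] using ne_zero

end BinomialSquares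

/-- The affine points of the curve `y² = x³ - m`. -/
def mordellPoints {R : Type*} [CommRing R] (m : R) : Set (R × R) :=
  {p | p.2 ^ 2 = p.1 ^ 3 - m}

theorem snd_ne_zero_of_mem_mordellPoints {R : Type*} [CommRing R] {m : R}
    (hm : ∀ b : R, b ^ 3 ≠ m) {p : R × R} (hp : p ∈ mordellPoints m) : p.2 ≠ 0 := by
  intro hy
  have cube_sub_eq_zero : p.1 ^ 3 - m = 0 := by
    rw [← show p.2 ^ 2 = p.1 ^ 3 - m from hp, hy, zero_pow two_ne_zero]
  exact hm p.1 (sub_eq_zero.mp cube_sub_eq_zero)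

section PointCoords

variable {F : Type*} [Field F] {m : F}

/-- The coordinates, in `1, ω, ω²`, of the element attached to the point `(x, y)`. -/
def pointCoords (p : F × F) : Fin 3 → F :=
  ![-p.1 ^ 2 / (2 * p.2), p.1 / p.2, 1 / p.2]

/-- The point `(B / C, 1 / C)` recovered from coordinates `(A, B, C)`; it inverts `pointCoords`
between the curve and `binomialSquareCoords`. -/
def pointOfCoords (v : Fin 3 → F) : F × F :=
  (v 1 / v 2, 1 / v 2)

theorem pointOfCoords_pointCoords {p : F × F} (hy : p.2 ≠ 0) :
    pointOfCoords (pointCoords p) = p := by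
  ext <;> simp [pointOfCoords, pointCoords, hy]

theorem pointOfCoords_mem_mordellPoints {v : Fin 3 → F} (hv : v ∈ binomialSquareCoords m) :
    pointOfCoords v ∈ mordellPoints m := by
  have hC := apply_two_ne_zero_of_mem_binomialSquareCoords hv
  obtain ⟨omega_coord, omega_sq_coord⟩ := hv
  simp only [pointOfCoords, mordellPoints, Set.mem_ofPred_eq]
  field_simp
  linear_combination v 2 * omega_coord - v 1 * omega_sq_coord

variable [NeZero (2 : F)]

theorem pointCoords_mem_binomialSquareCoords {p : F × F} (hy : p.2 ≠ 0)
    (hp : p ∈ mordellPoints m) : pointCoords p ∈ binomialSquareCoords m := by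
  have h2 : (2 : F) ≠ 0 := two_ne_zero
  have curve_eq : p.2 ^ 2 = p.1 ^ 3 - m := hp
  constructor <;> simp only [pointCoords, Matrix.cons_val] <;> field_simp
  · linear_combination curve_eq
  · ring

theorem pointCoords_pointOfCoords {v : Fin 3 → F} (hv : v ∈ binomialSquareCoords m) :
    pointCoords (pointOfCoords v) = v := by
  have h2 : (2 : F) ≠ 0 := two_ne_zero
  have hC := apply_two_ne_zero_of_mem_binomialSquareCoords hv
  have hA : -(v 1 / v 2) ^ 2 / (2 * (1 / v 2)) = v 0 := by
    field_simp
    linear_combination -hv.2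
  ext i
  fin_cases i
  · exact hA
  · simp [pointCoords, pointOfCoords, hC]
  · simp [pointCoords, pointOfCoords]

theorem bijOn_pointCoords (hm : ∀ b : F, b ^ 3 ≠ m) :
    Set.BijOn pointCoords (mordellPoints m) (binomialSquareCoords m) :=
  Set.InvOn.bijOn (f' := pointOfCoords)
    ⟨fun _ hp => pointOfCoords_pointCoords (snd_ne_zero_of_mem_mordellPoints hm hp),
      fun _ hv => pointCoords_pointOfCoords hv⟩
    (fun _ hp => pointCoords_mem_binomialSquareCoords (snd_ne_zero_of_mem_mordellPoints hm hp) hp)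
    (fun _ hv => pointOfCoords_mem_mordellPoints hv)

end PointCoords

theorem bijection_points_binomial_squares_general {F K : Type*} [Field F] [NeZero (2 : F)]
    [CommRing K] [Algebra F K] {m : F} (hm : ∀ b : F, b ^ 3 ≠ m) (hK : Module.finrank F K = 3)
    {ω : K} (hω : ω ^ 3 = algebraMap F K m) :
    Set.BijOn
      (fun p : F × F =>
        algebraMap F K (-p.1 ^ 2 / (2 * p.2)) + algebraMap F K (p.1 / p.2) * ω
          + algebraMap F K (1 / p.2) * ω ^ 2)
      {p : F × F | p.2 ^ 2 = p.1 ^ 3 - m}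
      {α : K | α ≠ 0 ∧ ∃ a : F, α ^ 2 = algebraMap F K a - ω} := by
  have coords_bijective := powCombination_bijective_of_pow_prime_eq Nat.prime_three hm hω hK
  refine ((bijOn_powCombination_binomialSquareCoords hω coords_bijective).comp
    (bijOn_pointCoords hm)).congr fun p _ => ?_
  exact powCombination_three_apply ω (pointCoords p)

/-- The map `(x, y) ↦ −x²/(2y) + (x/y)ω + (1/y)ω²` is a bijection from
the set of affine rational points of `E_m : y² = x³ − m` onto
`S_m = {α ∈ K^× : α² = a − ω for some a ∈ ℚ}`. -/
theorem bijection_points_binomial_squares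
    (m : ℤ) (hm : ¬ ∃ k : ℤ, k ^ 3 = m)
    (K : Type*) [Field K] [CharZero K] (hK : Module.finrank ℚ K = 3)
    (ω : K) (hω : ω ^ 3 = (m : K)) :
    Set.BijOn
      (fun p : ℚ × ℚ =>
        ((-p.1 ^ 2 / (2 * p.2) : ℚ) : K) + ((p.1 / p.2 : ℚ) : K) * ω
          + ((1 / p.2 : ℚ) : K) * ω ^ 2)
      {p : ℚ × ℚ | p.2 ^ 2 = p.1 ^ 3 - (m : ℚ)}
      {α : K | α ≠ 0 ∧ ∃ a : ℚ, α ^ 2 = (a : K) - ω} :=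
  bijection_points_binomial_squares_general
    (fun _ hb => hm (exists_pow_eq_of_pow_eq_algebraMap three_pos hb)) hK (by simpa using hω)
end

section
/- Let b be a nonzero integer and let E' denote the elliptic curve y² = x³ − mb³. For an integer a, the following are equivalent: (i) a³ − mb³ = 1 and a − bω is a square in K^× (i.e. a − bω is a binomial unit that is a square); (ii) there exists a rational point P ∈ E'(ℚ) with 2P = (a, 1). -/
/-- The quadratic twist `E' : y² = x³ − mb³` over `ℚ` in Weierstrass form. -/
def Wmb (m b : ℤ) : WeierstrassCurve.Affine ℚ := ⟨0, 0, 0, 0, -((m : ℚ) * (b : ℚ) ^ 3)⟩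

/-!
This is the injectivity of the `2`-descent map `(a, d) ↦ a - θ` on `W(F) / 2 W(F)`, where `θ` is a
root of the `2`-division polynomial `Ψ₂Sq = 4x³ + b₂x² + 2b₄x + b₆`, assumed irreducible. The point
`(a, d)` is `± 2 (x₀, y₀)` exactly when some line `L` is tangent to `W` at `(x₀, y₀)` and meets `W`
again above `a`. Writing `2y + a₁x + a₃ = 2r` on this line, tangency is the polynomial identity
`Ψ₂Sq = 4 (r² + (x - x₀)² (x - a))`, and evaluating at `θ` gives `a - θ = (r(θ) / (θ - x₀))²`.
Conversely, if `a - θ = α²` in the cubic field, a dimension count yields `(θ - x₀) α = r(θ)` with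
`r` linear; then `r² + (x - x₀)² (x - a)` is a monic cubic vanishing at `θ`, so the identity holds.
-/

open Polynomial WeierstrassCurve.Affine Module

section CubicField

lemma exists_aeval_mul_eq_aeval {F A : Type*} [Field F] [Ring A] [Algebra F A]
    [FiniteDimensional F A] {m n : ℕ} (hmn : finrank F A < (m + 1) + (n + 1)) (θ α : A) :
    ∃ q r : F[X], q.natDegree ≤ m ∧ r.natDegree ≤ n ∧ (q ≠ 0 ∨ r ≠ 0) ∧
      aeval θ q * α = aeval θ r := by
  let evalθ : F[X] →ₗ[F] A := (aeval θ).toLinearMap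
  let φ : degreeLT F (m + 1) × degreeLT F (n + 1) →ₗ[F] A :=
    ((LinearMap.mulRight F α ∘ₗ evalθ).domRestrict _).coprod (-evalθ.domRestrict _)
  have hfin (k : ℕ) : FiniteDimensional F (degreeLT F k) := .of_basis (degreeLT.basis F k)
  have hφ : LinearMap.ker φ ≠ ⊥ := by
    apply LinearMap.ker_ne_bot_of_finrank_lt
    simpa [finrank_eq_card_basis (degreeLT.basis F _)] using hmn
  obtain ⟨⟨⟨q, hq⟩, ⟨r, hr⟩⟩, hker, hne⟩ := Submodule.exists_mem_ne_zero_of_ne_bot hφ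
  refine ⟨q, r, ?_, ?_, ?_, ?_⟩
  · exact natDegree_le_iff_degree_le.mpr (mem_degreeLE.mp (by rwa [← degreeLT_succ_eq_degreeLE]))
  · exact natDegree_le_iff_degree_le.mpr (mem_degreeLE.mp (by rwa [← degreeLT_succ_eq_degreeLE]))
  · contrapose! hne
    simp [hne]
  · simpa [φ, evalθ, ← sub_eq_add_neg, sub_eq_zero] using hker

lemma sq_add_sq_mul_X_sub_C_ne_zero {R : Type*} [CommRing R] [IsDomain R] (r : R[X]) {q : R[X]}
    (hq : q ≠ 0) (a : R) : r ^ 2 + q ^ 2 * (X - C a) ≠ 0 := by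
  intro h
  have hdeg : (r ^ 2).natDegree = (q ^ 2 * (X - C a)).natDegree := by
    rw [eq_neg_of_add_eq_zero_left h, natDegree_neg]
  rw [natDegree_mul (pow_ne_zero 2 hq) (X_sub_C_ne_zero a), natDegree_X_sub_C, natDegree_pow,
    natDegree_pow] at hdeg
  omega

variable {F K : Type*} [Field F] [Field K] [Algebra F K] {p q r : F[X]} {θ α : K} {a : F}

lemma dvd_sq_add_sq_mul_X_sub_C (hp : Irreducible p) (hθ : aeval θ p = 0)
    (hα : α ^ 2 = algebraMap F K a - θ) (hqr : aeval θ q * α = aeval θ r) :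
    p ∣ r ^ 2 + q ^ 2 * (X - C a) := by
  rw [← hp.dvd_iff_aeval_eq_zero hθ]
  simp only [map_add, map_mul, map_pow, map_sub, aeval_X, aeval_C]
  linear_combination (-aeval θ r - aeval θ q * α) * hqr + aeval θ q ^ 2 * hα

lemma exists_sub_mul_eq_aeval_linear (hp : Irreducible p) (hdeg : p.natDegree = 3)
    (hK : finrank F K = 3) (hθ : aeval θ p = 0) (hα : α ^ 2 = algebraMap F K a - θ) :
    ∃ (x : F) (r : F[X]), r.natDegree ≤ 1 ∧ aeval θ (X - C x) * α = aeval θ r := by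
  have : FiniteDimensional F K := finite_of_finrank_pos (by omega)
  obtain ⟨q, r, hq, hr, hne, hqr⟩ :=
    exists_aeval_mul_eq_aeval (F := F) (m := 1) (n := 1) (by omega) θ α
  have hq0 : q ≠ 0 := by
    rintro rfl
    have hpr : p ∣ r := (hp.dvd_iff_aeval_eq_zero hθ).mp (by simpa using hqr.symm)
    simp [eq_zero_of_dvd_of_natDegree_lt hpr (by omega)] at hne
  have hq1 : 1 ≤ q.natDegree := by
    have hlower := natDegree_le_of_dvd (dvd_sq_add_sq_mul_X_sub_C hp hθ hα hqr)
      (sq_add_sq_mul_X_sub_C_ne_zero r hq0 a)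
    have hupper : (r ^ 2 + q ^ 2 * (X - C a)).natDegree ≤ max (2 * 1) (2 * q.natDegree + 1) := by
      refine natDegree_add_le_of_le (natDegree_pow_le_of_le 2 hr) ?_
      compute_degree!
    omega
  obtain ⟨e, f, rfl⟩ := exists_eq_X_add_C_of_natDegree_le_one hq
  have he : e ≠ 0 := by
    rintro rfl
    simp at hq1
  refine ⟨-(f / e), C e⁻¹ * r, (natDegree_C_mul_le _ _).trans hr, ?_⟩
  have hmonic : X - C (-(f / e)) = C e⁻¹ * (C e * X + C f) := by
    rw [mul_add, ← mul_assoc, ← C_mul, ← C_mul, inv_mul_cancel₀ he]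
    simp [div_eq_inv_mul]
  rw [hmonic, map_mul, map_mul, mul_assoc, hqr]

lemma exists_eq_leadingCoeff_mul_sq_add (hp : Irreducible p) (hdeg : p.natDegree = 3)
    (hK : finrank F K = 3) (hθ : aeval θ p = 0) (hα : α ^ 2 = algebraMap F K a - θ) :
    ∃ (x : F) (r : F[X]), r.natDegree ≤ 1 ∧
      p = C p.leadingCoeff * (r ^ 2 + (X - C x) ^ 2 * (X - C a)) := by
  obtain ⟨x, r, hr, hxr⟩ := exists_sub_mul_eq_aeval_linear hp hdeg hK hθ hα
  refine ⟨x, r, hr, ?_⟩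
  have hdvd := dvd_sq_add_sq_mul_X_sub_C hp hθ hα hxr
  have hr2 : (r ^ 2).natDegree ≤ 2 := natDegree_pow_le_of_le 2 hr
  have hcube : ((X - C x) ^ 2 * (X - C a)).Monic := by monicity!
  have hcube3 : ((X - C x) ^ 2 * (X - C a)).natDegree = 3 := by compute_degree!
  have hmonic := hcube.add_of_right (degree_lt_degree (p := r ^ 2) (by omega))
  have hle : (r ^ 2 + (X - C x) ^ 2 * (X - C a)).natDegree ≤ p.natDegree :=
    (natDegree_add_le _ _).trans (by omega)
  have hassoc := associated_of_dvd_of_natDegree_le hdvd hmonic.ne_zero hle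
  exact eq_leadingCoeff_mul_of_monic_of_dvd_of_natDegree_le hmonic hassoc.symm.dvd
    (natDegree_le_of_dvd hdvd hmonic.ne_zero)

end CubicField

section TangentLine

/-- The line of slope `ℓ` through `(x, y)` meets the affine Weierstrass curve `W` doubly above `x`
and a third time above `a`. It is encoded by the equation of `W` restricted to the line. -/
def IsTangentLine {R : Type*} [CommRing R] (W : WeierstrassCurve.Affine R) (x y ℓ a : R) : Prop :=
  W.addPolynomial x y ℓ = -((X - C x) * (X - C x) * (X - C a))

namespace IsTangentLine

variable {R : Type*} [CommRing R] {W : WeierstrassCurve.Affine R} {x y ℓ a : R}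

lemma equation (h : IsTangentLine W x y ℓ a) : W.Equation x y := by
  have heval := congr_arg (eval x) h
  simp only [addPolynomial_eq, Cubic.toPoly, eval_neg, eval_add, eval_mul, eval_sub, eval_pow,
    eval_X, eval_C] at heval
  rw [equation_iff']
  linear_combination heval

lemma addX_eq (h : IsTangentLine W x y ℓ a) : W.addX x x ℓ = a := by
  rw [IsTangentLine, addPolynomial_eq, neg_inj, Cubic.prod_X_sub_C_eq] at h
  rw [addX]
  linear_combination -Cubic.b_of_eq h

lemma slope_mul_eq (h : IsTangentLine W x y ℓ a) :
    ℓ * (y - W.negY x y) = 3 * x ^ 2 + 2 * W.a₂ * x + W.a₄ - W.a₁ * y := by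
  rw [IsTangentLine, addPolynomial_eq, neg_inj, Cubic.prod_X_sub_C_eq] at h
  rw [negY]
  linear_combination -Cubic.c_of_eq h - 2 * x * Cubic.b_of_eq h

end IsTangentLine

variable {F : Type*} [Field F] {W : WeierstrassCurve.Affine F} {x y ℓ a d : F}

lemma IsTangentLine.slope_eq [DecidableEq F] (h : IsTangentLine W x y ℓ a)
    (hy : y ≠ W.negY x y) : W.slope x x y y = ℓ := by
  rw [slope_of_Y_ne rfl hy, div_eq_iff (sub_ne_zero.mpr hy), h.slope_mul_eq]

lemma isTangentLine_slope [DecidableEq F] (h : W.Equation x y) (hy : y ≠ W.negY x y) :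
    IsTangentLine W x y (W.slope x x y y) (W.addX x x (W.slope x x y y)) :=
  addPolynomial_slope h h fun hxy ↦ hy hxy.2

lemma exists_two_nsmul_eq_some_iff [DecidableEq F] (h : W.Nonsingular a d) :
    (∃ P : W.Point, 2 • P = .some a d h) ↔
      ∃ x y ℓ, y ≠ W.negY x y ∧ IsTangentLine W x y ℓ a := by
  constructor
  · rintro ⟨P, hP⟩
    rw [two_nsmul] at hP
    rcases P with _ | ⟨x, y, hxy⟩
    · exact absurd hP.symm (Point.some_ne_zero h)
    · have hy : y ≠ W.negY x y := by
        intro hy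
        rw [Point.add_self_of_Y_eq hy] at hP
        exact Point.some_ne_zero h hP.symm
      rw [Point.add_self_of_Y_ne hy, Point.some.injEq] at hP
      exact ⟨x, y, _, hy, hP.1 ▸ isTangentLine_slope hxy.1 hy⟩
  · rintro ⟨x, y, ℓ, hy, hline⟩
    let P : W.Point := .some x y ((nonsingular_iff ..).mpr ⟨hline.equation, .inr hy⟩)
    have hX : W.addX x x (W.slope x x y y) = a := by rw [hline.slope_eq hy, hline.addX_eq]
    rcases Point.X_eq_iff.mp hX with hP | hP
    · exact ⟨P, by rw [two_nsmul, Point.add_self_of_Y_ne hy, hP]⟩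
    · exact ⟨-P, by rw [smul_neg, two_nsmul, Point.add_self_of_Y_ne hy, hP, neg_neg]⟩

end TangentLine

section TwoDescent

lemma four_mul_addPolynomial {R : Type*} [CommRing R] (W : WeierstrassCurve.Affine R)
    (x y ℓ : R) : 4 * W.addPolynomial x y ℓ =
      (2 * linePolynomial x y ℓ + C W.a₁ * X + C W.a₃) ^ 2 - W.Ψ₂Sq := by
  rw [addPolynomial_eq, linePolynomial, WeierstrassCurve.Ψ₂Sq, Cubic.toPoly, WeierstrassCurve.b₂,
    WeierstrassCurve.b₄, WeierstrassCurve.b₆]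
  simp only [map_add, map_sub, map_mul, map_neg, map_pow, map_one, map_ofNat]
  ring

variable {F : Type*} [Field F] [NeZero (2 : F)] {W : WeierstrassCurve.Affine F} {x y ℓ a : F}

lemma four_ne_zero_of_neZero_two : (4 : F) ≠ 0 := by
  simpa [← show (2 : F) * 2 = 4 by norm_num] using two_ne_zero (α := F)

lemma isTangentLine_iff_Ψ₂Sq_eq : IsTangentLine W x y ℓ a ↔
    W.Ψ₂Sq = (2 * linePolynomial x y ℓ + C W.a₁ * X + C W.a₃) ^ 2 +
      4 * ((X - C x) ^ 2 * (X - C a)) := by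
  have h4 : (4 : F[X]) ≠ 0 := C_ofNat (R := F) 4 ▸ C_ne_zero.mpr four_ne_zero_of_neZero_two
  have hline := four_mul_addPolynomial W x y ℓ
  rw [IsTangentLine, ← mul_right_inj' h4, hline]
  constructor <;> intro h <;> linear_combination -h

lemma Y_ne_negY_of_irreducible_Ψ₂Sq (hW : Irreducible W.Ψ₂Sq) (h : W.Equation x y) :
    y ≠ W.negY x y := by
  intro hy
  have hdeg := W.natDegree_Ψ₂Sq four_ne_zero_of_neZero_two
  refine hW.not_isRoot_of_natDegree_ne_one (x := x) (by omega) ?_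
  rw [equation_iff'] at h
  rw [negY] at hy
  simp only [IsRoot, WeierstrassCurve.Ψ₂Sq, WeierstrassCurve.b₂, WeierstrassCurve.b₄,
    WeierstrassCurve.b₆, eval_add, eval_mul, eval_pow, eval_X, eval_C]
  linear_combination (2 * y + W.a₁ * x + W.a₃) * hy - 4 * h

variable {K : Type*} [Field K] [Algebra F K] {θ : K}

lemma algebraMap_ne_of_irreducible_Ψ₂Sq (hW : Irreducible W.Ψ₂Sq) (hθ : aeval θ W.Ψ₂Sq = 0)
    (x : F) : algebraMap F K x ≠ θ := by
  rintro rfl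
  have hdeg := W.natDegree_Ψ₂Sq four_ne_zero_of_neZero_two
  exact hW.aeval_ne_zero_of_natDegree_ne_one (by omega) ⟨x, rfl⟩ hθ

lemma IsTangentLine.exists_sq_eq_sub_root (h : IsTangentLine W x y ℓ a)
    (hW : Irreducible W.Ψ₂Sq) (hθ : aeval θ W.Ψ₂Sq = 0) :
    ∃ α : K, α ^ 2 = algebraMap F K a - θ := by
  have hx : θ - algebraMap F K x ≠ 0 :=
    sub_ne_zero.mpr (algebraMap_ne_of_irreducible_Ψ₂Sq hW hθ x).symm
  have h2 : (2 : K) ≠ 0 :=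
    map_ofNat (algebraMap F K) 2 ▸ (map_ne_zero (algebraMap F K)).mpr two_ne_zero
  rw [isTangentLine_iff_Ψ₂Sq_eq.mp h] at hθ
  set r := 2 * linePolynomial x y ℓ + C W.a₁ * X + C W.a₃
  have hr : aeval θ r ^ 2 + 4 * ((θ - algebraMap F K x) ^ 2 * (θ - algebraMap F K a)) = 0 := by
    simpa [map_ofNat] using hθ
  refine ⟨aeval θ r / (2 * (θ - algebraMap F K x)), ?_⟩
  rw [div_pow, div_eq_iff (pow_ne_zero 2 (mul_ne_zero h2 hx))]
  linear_combination hr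

lemma exists_isTangentLine_of_sq_eq_sub_root (hW : Irreducible W.Ψ₂Sq) (hK : finrank F K = 3)
    (hθ : aeval θ W.Ψ₂Sq = 0) {α : K} (hα : α ^ 2 = algebraMap F K a - θ) :
    ∃ x y ℓ, IsTangentLine W x y ℓ a := by
  have hdeg := W.natDegree_Ψ₂Sq four_ne_zero_of_neZero_two
  obtain ⟨x, r, hr, hΨ⟩ := exists_eq_leadingCoeff_mul_sq_add hW hdeg hK hθ hα
  obtain ⟨s, t, rfl⟩ := exists_eq_X_add_C_of_natDegree_le_one hr
  refine ⟨x, s * x + t - (W.a₁ * x + W.a₃) / 2, s - W.a₁ / 2, isTangentLine_iff_Ψ₂Sq_eq.mpr ?_⟩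
  have hline : 2 * linePolynomial x (s * x + t - (W.a₁ * x + W.a₃) / 2) (s - W.a₁ / 2) +
      C W.a₁ * X + C W.a₃ = 2 * (C s * X + C t) := by
    have hhalf (c : F) : 2 * C (c / 2) = C c := by
      rw [← C_ofNat, ← C_mul, mul_div_cancel₀ c two_ne_zero]
    have hsum : C (W.a₁ * x + W.a₃) = C W.a₁ * C x + C W.a₃ := by rw [C_add, C_mul]
    simp only [linePolynomial, C_sub, C_add, C_mul]
    linear_combination (C x - X) * hhalf W.a₁ - hhalf (W.a₁ * x + W.a₃) - hsum
  rw [hline, hΨ, W.leadingCoeff_Ψ₂Sq four_ne_zero_of_neZero_two, map_ofNat]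
  ring

theorem binomial_unit_square_iff_double_point_general [DecidableEq F] (hW : Irreducible W.Ψ₂Sq)
    (hK : finrank F K = 3) (hθ : aeval θ W.Ψ₂Sq = 0) (a d : F) :
    (W.Equation a d ∧ ∃ α : K, α ≠ 0 ∧ α ^ 2 = algebraMap F K a - θ) ↔
      ∃ (P : W.Point) (h : W.Nonsingular a d), 2 • P = .some a d h := by
  constructor
  · rintro ⟨had, α, -, hα⟩
    have hns : W.Nonsingular a d :=
      (nonsingular_iff ..).mpr ⟨had, .inr (Y_ne_negY_of_irreducible_Ψ₂Sq hW had)⟩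
    obtain ⟨x, y, ℓ, hline⟩ := exists_isTangentLine_of_sq_eq_sub_root hW hK hθ hα
    have hy := Y_ne_negY_of_irreducible_Ψ₂Sq hW hline.equation
    obtain ⟨P, hP⟩ := (exists_two_nsmul_eq_some_iff hns).mpr ⟨x, y, ℓ, hy, hline⟩
    exact ⟨P, hns, hP⟩
  · rintro ⟨P, hns, hP⟩
    obtain ⟨x, y, ℓ, -, hline⟩ := (exists_two_nsmul_eq_some_iff hns).mp ⟨P, hP⟩
    obtain ⟨α, hα⟩ := hline.exists_sq_eq_sub_root hW hθ
    refine ⟨hns.1, α, ?_, hα⟩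
    rintro rfl
    exact algebraMap_ne_of_irreducible_Ψ₂Sq hW hθ a (by linear_combination -hα)

end TwoDescent

section PureCubic

variable {m b : ℤ}

lemma Wmb_Ψ₂Sq : (Wmb m b).Ψ₂Sq = C 4 * (X ^ 3 - C ((m : ℚ) * b ^ 3)) := by
  have hb₂ : (Wmb m b).b₂ = 0 := by simp [WeierstrassCurve.b₂, Wmb]
  have hb₄ : (Wmb m b).b₄ = 0 := by simp [WeierstrassCurve.b₄, Wmb]
  have hb₆ : (Wmb m b).b₆ = -(4 * (m * b ^ 3)) := by simp [WeierstrassCurve.b₆, Wmb]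
  rw [WeierstrassCurve.Ψ₂Sq, hb₂, hb₄, hb₆, mul_zero, C_0, C_neg, C_mul]
  ring

lemma Wmb_equation_one_iff {a : ℤ} : (Wmb m b).Equation a 1 ↔ a ^ 3 - m * b ^ 3 = 1 := by
  rw [equation_iff]
  simp only [Wmb]
  qify
  constructor <;> intro h <;> linear_combination -h

lemma rat_pow_ne_of_forall_int_pow_ne {n : ℕ} (hn : 0 < n) (hm : ¬ ∃ k : ℤ, k ^ n = m) (q : ℚ) :
    q ^ n ≠ m := by
  intro h
  obtain ⟨k, rfl⟩ := IsIntegrallyClosed.exists_algebraMap_eq_of_isIntegral_pow hn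
    (h ▸ isIntegral_algebraMap (x := m) : IsIntegral ℤ (q ^ n))
  rw [eq_intCast] at h
  exact hm ⟨k, by exact_mod_cast h⟩

lemma irreducible_Wmb_Ψ₂Sq (hm : ¬ ∃ k : ℤ, k ^ 3 = m) (hb : b ≠ 0) :
    Irreducible (Wmb m b).Ψ₂Sq := by
  have hb' : (b : ℚ) ≠ 0 := by exact_mod_cast hb
  have h4 : IsUnit (C (4 : ℚ)) := isUnit_C.mpr (by norm_num)
  rw [Wmb_Ψ₂Sq, irreducible_isUnit_mul h4]
  refine X_pow_sub_C_irreducible_of_prime Nat.prime_three fun q hq ↦ ?_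
  refine rat_pow_ne_of_forall_int_pow_ne three_pos hm (q / b) ?_
  rw [div_pow, hq, mul_div_cancel_right₀ _ (pow_ne_zero 3 hb')]

lemma aeval_Wmb_Ψ₂Sq {K : Type*} [Field K] [CharZero K] {ω : K} (hω : ω ^ 3 = m) :
    aeval (b * ω) (Wmb m b).Ψ₂Sq = 0 := by
  simp [Wmb_Ψ₂Sq, mul_pow, hω, mul_comm]

end PureCubic

/-- For integers `a`, `b ≠ 0`, the element `a − bω` is a binomial unit
(`a³ − mb³ = 1`) that is a square in `K^×` iff there is `P ∈ E'(ℚ)` with `2P = (a, 1)`,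
where `E' : y² = x³ − mb³`. -/
theorem binomial_unit_square_iff_double_point
    (m : ℤ) (hm : ¬ ∃ k : ℤ, k ^ 3 = m)
    (K : Type*) [Field K] [CharZero K] (hK : Module.finrank ℚ K = 3)
    (ω : K) (hω : ω ^ 3 = (m : K))
    (b : ℤ) (hb : b ≠ 0) (a : ℤ) :
    (a ^ 3 - m * b ^ 3 = 1 ∧
        ∃ α : K, α ≠ 0 ∧ α ^ 2 = (a : K) - (b : K) * ω) ↔
      ∃ (P : (Wmb m b).Point) (h : (Wmb m b).Nonsingular (a : ℚ) 1),
        2 • P = WeierstrassCurve.Affine.Point.some _ _ h := by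
  simpa [Wmb_equation_one_iff] using binomial_unit_square_iff_double_point_general
    (irreducible_Wmb_Ψ₂Sq hm hb) hK (aeval_Wmb_Ψ₂Sq hω) (a : ℚ) 1
end

section
/- Let m be a cubefree integer with m ≢ 0, ±1 (mod 9), not a perfect cube, and let b be a nonzero integer. Let (x, y) be a rational point on the curve y² = x³ − mb³ with x = a/e² for coprime integers a and e, and assume gcd(a, b) = 1. Then the ideal (a − be²ω)O_K is the square of an ideal of O_K. -/
open NumberField

/-!
Put `B = be²`. Clearing denominators gives an integer `c` with `c² = a³ - mB³`, and this factors as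
`(a - Bω)(a² + aBω + (Bω)²)`. Fix a prime `P` of a Dedekind domain containing `a - Bω`.

If `a ∉ P`, then `P` does not contain the second factor: otherwise `3 ∈ P`, and reducing
`a³ ≡ mB³` modulo `9` gives `m ≡ ±1`. Hence `a - Bω` has the valuation of `c²` at `P`.

If `a ∈ P`, then `ω ∈ P`, and the prime number `p` below `P` satisfies `p² ∥ m` because `m` is
cubefree. Thus `ω³` has the valuation of `p²`, so the valuation of `ω` is even and smaller than that
of `p`, and `a - Bω` has the valuation of `ω`.
-/

open IsDedekindDomain

theorem exists_eq_sq_of_pow_three_eq_sq {G : Type*} [CommGroupWithZero G] {g h : G}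
    (hgh : g ^ 3 = h ^ 2) : ∃ k : G, g = k ^ 2 := by
  rcases eq_or_ne g 0 with rfl | hg
  · exact ⟨0, by simp⟩
  · refine ⟨h / g, ?_⟩
    rw [div_pow, eq_div_iff (pow_ne_zero 2 hg), ← hgh, ← pow_succ']

theorem lt_of_pow_three_eq_sq {G : Type*} [LinearOrderedCommGroupWithZero G] {g h : G}
    (hgh : g ^ 3 = h ^ 2) (hg₀ : g ≠ 0) (hg₁ : g < 1) : h < g := by
  refine lt_of_pow_lt_pow_left₀ 2 zero_le ?_
  calc h ^ 2 = g ^ 3 := hgh.symm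
    _ < g ^ 2 := pow_lt_pow_right_of_lt_one₀ (zero_lt_iff.2 hg₀) hg₁ (by norm_num)

theorem valuation_sub_eq_of_pow_three_eq_sq {R G : Type*} [Ring R]
    [LinearOrderedCommGroupWithZero G] {v : Valuation R G} {x y : R} {h : G} (hx : v x ≤ h)
    (hy : v y ^ 3 = h ^ 2) (hy₁ : v y < 1) : v (x - y) = v y := by
  rcases eq_or_ne (v y) 0 with hy₀ | hy₀
  · have hh : h = 0 := by simpa [hy₀] using hy.symm
    have hx₀ : v x = 0 := le_zero_iff.1 (hh ▸ hx)
    rw [hy₀, ← le_zero_iff]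
    exact v.map_sub_le hx₀.le hy₀.le
  · exact v.map_sub_eq_of_lt_right (hx.trans_lt (lt_of_pow_three_eq_sq hy hy₀ hy₁))

theorem exists_span_singleton_eq_pow {R : Type*} [CommRing R] [IsDedekindDomain R] {x : R}
    {n : ℕ} (hn : n ≠ 0) (h : ∀ v : HeightOneSpectrum R, ∃ g, v.intValuation x = g ^ n) :
    ∃ I : Ideal R, Ideal.span {x} = I ^ n := by
  rcases eq_or_ne x 0 with rfl | hx
  · exact ⟨0, by rw [zero_pow hn, Ideal.zero_eq_bot, Ideal.span_singleton_eq_bot]⟩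
  have hspan : Associates.mk (Ideal.span {x}) ≠ 0 := by simpa using hx
  obtain ⟨J, hJ⟩ := Associates.is_pow_of_dvd_count hspan (k := n) fun p hp ↦ by
    obtain ⟨P, rfl⟩ := Associates.mk_surjective p
    have hP : Prime P := (Associates.irreducible_mk.1 hp).prime
    obtain ⟨g, hg⟩ := h ⟨P, Ideal.isPrime_of_prime hP, hP.ne_zero⟩
    rw [HeightOneSpectrum.intValuation_if_neg _ hx] at hg
    have hlog := congrArg WithZero.log hg
    rw [WithZero.log_exp, WithZero.log_pow, nsmul_eq_mul] at hlog
    exact Int.natCast_dvd_natCast.1 (dvd_neg.1 ⟨_, hlog⟩)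
  obtain ⟨I, rfl⟩ := Associates.mk_surjective J
  refine ⟨I, associated_iff_eq.1 (Associates.mk_eq_mk_iff_associated.1 ?_)⟩
  rw [hJ, Associates.mk_pow]

theorem exists_prime_forall_intCast_mem_iff_dvd {R : Type*} [CommRing R] (P : Ideal R) [P.IsPrime]
    {n : ℤ} (hn : n ≠ 0) (hnP : (n : R) ∈ P) :
    ∃ p : ℤ, Prime p ∧ ∀ k : ℤ, (k : R) ∈ P ↔ p ∣ k := by
  have mem_iff (k : ℤ) : (k : R) ∈ P ↔ (ringChar (R ⧸ P) : ℤ) ∣ k := by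
    rw [← CharP.intCast_eq_zero_iff (R ⧸ P), ← Ideal.Quotient.eq_zero_iff_mem, map_intCast]
  refine ⟨ringChar (R ⧸ P), Nat.prime_iff_prime_int.1 ?_, mem_iff⟩
  refine (CharP.char_is_prime_or_zero (R ⧸ P) _).resolve_right fun hchar ↦ hn ?_
  simpa [hchar] using (mem_iff n).1 hnP

theorem intCast_mem_iff_dvd {R : Type*} [CommRing R] {P : Ideal R} [P.IsPrime] {p : ℤ}
    (hp : Prime p) (hpP : (p : R) ∈ P) (k : ℤ) : (k : R) ∈ P ↔ p ∣ k := by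
  refine ⟨fun hk ↦ ?_, fun hpk ↦ P.mem_of_dvd (Int.cast_dvd_cast _ _ hpk) hpP⟩
  by_contra hpk
  exact Ideal.IsPrime.notMem_of_isCoprime_of_mem (hp.coprime_iff_not_dvd.2 hpk).intCast hpP hk

theorem exists_sq_eq_cube_add_mul_pow_six {A F : Type*} [CommRing A] [IsIntegrallyClosed A]
    [Field F] [Algebra A F] [IsFractionRing A F] {a e k : A} (he : e ≠ 0) {y : F}
    (hy : y ^ 2 = (algebraMap A F a / algebraMap A F e ^ 2) ^ 3 + algebraMap A F k) :
    ∃ c : A, c ^ 2 = a ^ 3 + k * e ^ 6 := by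
  have he' : algebraMap A F e ≠ 0 := by simpa using he
  have hsq : (y * algebraMap A F e ^ 3) ^ 2 = algebraMap A F (a ^ 3 + k * e ^ 6) := by
    rw [mul_pow, hy]
    simp only [map_add, map_mul, map_pow]
    field_simp
  obtain ⟨c, hc⟩ := IsIntegrallyClosed.exists_algebraMap_eq_of_isIntegral_pow (R := A) two_pos
    (hsq ▸ isIntegral_algebraMap)
  refine ⟨c, IsFractionRing.injective A F ?_⟩
  rw [map_pow, hc, hsq]

theorem intCast_zmod_nine_cube_eq_one_or_neg_one {n : ℤ} (hn : ¬ 3 ∣ n) :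
    (n : ZMod 9) ^ 3 = 1 ∨ (n : ZMod 9) ^ 3 = -1 := by
  have cubes : ∀ k : ZMod 9, 3 * k ≠ 0 → k ^ 3 = 1 ∨ k ^ 3 = -1 := by decide
  refine cubes n fun h ↦ hn ?_
  have h9 : (9 : ℤ) ∣ 3 * n := (ZMod.intCast_zmod_eq_zero_iff_dvd _ 9).1 (by exact_mod_cast h)
  omega

theorem intCast_zmod_nine_eq_one_or_neg_one {m a B c : ℤ} (hc : c ^ 2 = a ^ 3 - m * B ^ 3)
    (h3c : 3 ∣ c) (h3a : ¬ 3 ∣ a) (h3B : ¬ 3 ∣ B) : (m : ZMod 9) = 1 ∨ (m : ZMod 9) = -1 := by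
  have h9 : ((c ^ 2 : ℤ) : ZMod 9) = 0 :=
    (ZMod.intCast_zmod_eq_zero_iff_dvd _ 9).2 (pow_dvd_pow_of_dvd h3c 2)
  have hm : (a : ZMod 9) ^ 3 = m * (B : ZMod 9) ^ 3 := by
    rw [hc] at h9
    push_cast at h9
    exact sub_eq_zero.1 h9
  rcases intCast_zmod_nine_cube_eq_one_or_neg_one h3a with ha | ha <;>
    rcases intCast_zmod_nine_cube_eq_one_or_neg_one h3B with hB | hB <;>
    rw [ha, hB] at hm
  · exact .inl (by linear_combination -hm)
  · exact .inr (by linear_combination hm)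
  · exact .inr (by linear_combination -hm)
  · exact .inl (by linear_combination hm)

theorem sq_dvd_of_sq_eq_cube_sub {A : Type*} [CommRing A] [IsDomain A] {m a B c p : A}
    (hp : Prime p) (hc : c ^ 2 = a ^ 3 - m * B ^ 3) (hpa : p ∣ a) (hpm : p ∣ m) (hpB : ¬ p ∣ B) :
    p ^ 2 ∣ m := by
  have hpc : p ∣ c := hp.dvd_of_dvd_pow (n := 2) <|
    hc ▸ dvd_sub (dvd_pow hpa three_ne_zero) (hpm.mul_right _)
  have hpB3 : ¬ p ∣ B ^ 3 := mt hp.dvd_of_dvd_pow hpB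
  refine hp.pow_dvd_of_dvd_mul_right 2 hpB3 ?_
  rw [show m * B ^ 3 = a ^ 3 - c ^ 2 by rw [hc]; ring]
  exact dvd_sub ((pow_dvd_pow_of_dvd hpa 2).trans (pow_dvd_pow a (by norm_num)))
    (pow_dvd_pow_of_dvd hpc 2)

section CubicTwist

variable {R : Type*} [CommRing R] {m a B c : ℤ} {ω : R}

theorem sub_mul_sq_add_mul_add_sq (hω : ω ^ 3 = (m : R)) (hc : c ^ 2 = a ^ 3 - m * B ^ 3) :
    ((a : R) - B * ω) * (a ^ 2 + a * (B * ω) + (B * ω) ^ 2) = c ^ 2 := by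
  have hcR : (c : R) ^ 2 = a ^ 3 - m * B ^ 3 := by exact_mod_cast congrArg (Int.cast (R := R)) hc
  rw [hcR, ← hω]
  ring

theorem sq_add_mul_add_sq_notMem {P : Ideal R} [hP : P.IsPrime] (hω : ω ^ 3 = (m : R))
    (hc : c ^ 2 = a ^ 3 - m * B ^ 3) (hm₁ : (m : ZMod 9) ≠ 1) (hm₂ : (m : ZMod 9) ≠ -1)
    (hα : (a : R) - B * ω ∈ P) (ha : (a : R) ∉ P) :
    (a : R) ^ 2 + a * (B * ω) + (B * ω) ^ 2 ∉ P := by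
  intro hγ
  have h3a : (3 : R) * a ^ 2 ∈ P := by
    rw [show (3 : R) * a ^ 2 = (a ^ 2 + a * (B * ω) + (B * ω) ^ 2) +
      (a - B * ω) * (2 * a + B * ω) by ring]
    exact P.add_mem hγ (P.mul_mem_right _ hα)
  have h3 : (3 : R) ∈ P :=
    (hP.mem_or_mem h3a).resolve_right fun h ↦ ha (hP.mem_of_pow_mem 2 h)
  have hB : (B : R) ∉ P := fun h ↦ ha ((P.sub_mem_iff_left (P.mul_mem_right ω h)).1 hα)
  have hcP : (c : R) ∈ P :=
    hP.mem_of_pow_mem 2 (sub_mul_sq_add_mul_add_sq hω hc ▸ P.mul_mem_right _ hα)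
  have mem_iff := intCast_mem_iff_dvd Int.prime_three (by exact_mod_cast h3 : ((3 : ℤ) : R) ∈ P)
  rw [mem_iff] at ha hB hcP
  exact (intCast_zmod_nine_eq_one_or_neg_one hc hcP ha hB).elim hm₁ hm₂

theorem exists_eq_sq_mul_of_mem {P : Ideal R} [P.IsPrime] (hc : c ^ 2 = a ^ 3 - m * B ^ 3)
    (hcf : ∀ d : ℤ, d ^ 3 ∣ m → IsUnit d) (ha : (a : R) ∈ P) (hB : (B : R) ∉ P)
    (hmP : (m : R) ∈ P) : ∃ p u : ℤ, m = p ^ 2 * u ∧ p ∣ a ∧ (u : R) ∉ P := by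
  have hm₀ : m ≠ 0 := by
    rintro rfl
    exact not_isUnit_zero (hcf 0 (dvd_zero _))
  obtain ⟨p, hp, mem_iff⟩ := exists_prime_forall_intCast_mem_iff_dvd P hm₀ hmP
  rw [mem_iff] at ha hB hmP
  obtain ⟨u, rfl⟩ := sq_dvd_of_sq_eq_cube_sub hp hc ha hmP hB
  refine ⟨p, u, rfl, ha, fun hu ↦ hp.not_isUnit (hcf p ?_)⟩
  rw [pow_succ]
  exact mul_dvd_mul_left _ ((mem_iff u).1 hu)

variable [IsDedekindDomain R] {v : HeightOneSpectrum R}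

theorem intValuation_sub_mul_eq_sq_of_notMem (hω : ω ^ 3 = (m : R))
    (hc : c ^ 2 = a ^ 3 - m * B ^ 3) (hm₁ : (m : ZMod 9) ≠ 1) (hm₂ : (m : ZMod 9) ≠ -1)
    (hα : (a : R) - B * ω ∈ v.asIdeal) (ha : (a : R) ∉ v.asIdeal) :
    v.intValuation ((a : R) - B * ω) = v.intValuation c ^ 2 := by
  rw [← map_pow, ← sub_mul_sq_add_mul_add_sq hω hc, map_mul,
    HeightOneSpectrum.intValuation_eq_one_iff.2 (sq_add_mul_add_sq_notMem hω hc hm₁ hm₂ hα ha),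
    mul_one]

theorem exists_intValuation_sub_mul_eq_sq_of_mem (hω : ω ^ 3 = (m : R))
    (hc : c ^ 2 = a ^ 3 - m * B ^ 3) (hcf : ∀ d : ℤ, d ^ 3 ∣ m → IsUnit d) (haB : IsCoprime a B)
    (hα : (a : R) - B * ω ∈ v.asIdeal) (ha : (a : R) ∈ v.asIdeal) :
    ∃ g, v.intValuation ((a : R) - B * ω) = g ^ 2 := by
  have hB : (B : R) ∉ v.asIdeal := Ideal.IsPrime.notMem_of_isCoprime_of_mem haB.intCast ha
  have hωP : ω ∈ v.asIdeal :=
    (v.isPrime.mem_or_mem ((v.asIdeal.sub_mem_iff_right ha).1 hα)).resolve_left hB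
  have hmP : (m : R) ∈ v.asIdeal := hω ▸ Ideal.pow_mem_of_mem _ hωP 3 three_pos
  obtain ⟨p, u, hm, hpa, hu⟩ := exists_eq_sq_mul_of_mem hc hcf ha hB hmP
  have hBω : v.intValuation (B * ω) ^ 3 = v.intValuation p ^ 2 := by
    rw [map_mul, HeightOneSpectrum.intValuation_eq_one_iff.2 hB, one_mul, ← map_pow, hω, hm,
      Int.cast_mul, map_mul, HeightOneSpectrum.intValuation_eq_one_iff.2 hu, mul_one,
      Int.cast_pow, map_pow]
  have hBω_lt : v.intValuation (B * ω) < 1 :=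
    (v.intValuation_lt_one_iff_mem _).2 (Ideal.mul_mem_left _ _ hωP)
  have hap : v.intValuation (a : R) ≤ v.intValuation p := by
    obtain ⟨t, rfl⟩ := hpa
    rw [Int.cast_mul, map_mul]
    exact mul_le_of_le_one_right' (v.intValuation_le_one _)
  rw [valuation_sub_eq_of_pow_three_eq_sq hap hBω hBω_lt]
  exact exists_eq_sq_of_pow_three_eq_sq hBω

theorem exists_span_sub_mul_eq_sq (hω : ω ^ 3 = (m : R)) (hc : c ^ 2 = a ^ 3 - m * B ^ 3)
    (hcf : ∀ d : ℤ, d ^ 3 ∣ m → IsUnit d) (hm₁ : (m : ZMod 9) ≠ 1) (hm₂ : (m : ZMod 9) ≠ -1)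
    (haB : IsCoprime a B) : ∃ I : Ideal R, Ideal.span {(a : R) - B * ω} = I ^ 2 := by
  refine exists_span_singleton_eq_pow two_ne_zero fun v ↦ ?_
  by_cases hα : (a : R) - B * ω ∈ v.asIdeal
  · by_cases ha : (a : R) ∈ v.asIdeal
    · exact exists_intValuation_sub_mul_eq_sq_of_mem hω hc hcf haB hα ha
    · exact ⟨_, intValuation_sub_mul_eq_sq_of_notMem hω hc hm₁ hm₂ hα ha⟩
  · exact ⟨1, by rw [HeightOneSpectrum.intValuation_eq_one_iff.2 hα, one_pow]⟩

end CubicTwist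

theorem twist_ideal_square_of_point_general
    {m : ℤ} (hcf : ∀ d : ℤ, d ^ 3 ∣ m → IsUnit d)
    (hm₁ : (m : ZMod 9) ≠ 1) (hm₂ : (m : ZMod 9) ≠ -1)
    {R : Type*} [CommRing R] [IsDedekindDomain R] {ω : R} (hω : ω ^ 3 = (m : R))
    {b : ℤ} {x y : ℚ} (hxy : y ^ 2 = x ^ 3 - (m : ℚ) * (b : ℚ) ^ 3)
    {a e : ℤ} (he : e ≠ 0) (hx : x = (a : ℚ) / (e : ℚ) ^ 2)
    (hae : IsCoprime a e) (hab : IsCoprime a b) :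
    ∃ 𝔞 : Ideal R, Ideal.span {(a : R) - (b : R) * (e : R) ^ 2 * ω} = 𝔞 ^ 2 := by
  obtain ⟨c, hc⟩ := exists_sq_eq_cube_add_mul_pow_six (a := a) (k := -(m * b ^ 3)) he (y := y)
    (by simp [hxy, hx, sub_eq_add_neg])
  have hc' : c ^ 2 = a ^ 3 - m * (b * e ^ 2) ^ 3 := by rw [hc]; ring
  simpa using exists_span_sub_mul_eq_sq hω hc' hcf hm₁ hm₂ (hab.mul_right hae.pow_right)

/-- For cubefree `m ≢ 0, ±1 (mod 9)`, `b ≠ 0`, and a rational point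
`(x,y)` on `y² = x³ − mb³` with `x = a/e²` in lowest terms and `gcd(a,b) = 1`, the
ideal `(a − be²ω)` of `O_K` is the square of an ideal. -/
theorem twist_ideal_square_of_point
    (m : ℤ) (hm : ¬ ∃ k : ℤ, k ^ 3 = m) (hcf : ∀ d : ℤ, d ^ 3 ∣ m → IsUnit d)
    (h9 : (m : ZMod 9) ≠ 0 ∧ (m : ZMod 9) ≠ 1 ∧ (m : ZMod 9) ≠ -1)
    (K : Type*) [Field K] [NumberField K] (hK : Module.finrank ℚ K = 3)
    (ω : 𝓞 K) (hω : ω ^ 3 = (m : 𝓞 K))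
    (b : ℤ) (hb : b ≠ 0)
    (x y : ℚ) (hxy : y ^ 2 = x ^ 3 - (m : ℚ) * (b : ℚ) ^ 3)
    (a e : ℤ) (he : e ≠ 0) (hx : x = (a : ℚ) / (e : ℚ) ^ 2)
    (hae : IsCoprime a e) (hab : IsCoprime a b) :
    ∃ 𝔞 : Ideal (𝓞 K),
      Ideal.span {(a : 𝓞 K) - (b : 𝓞 K) * (e : 𝓞 K) ^ 2 * ω} = 𝔞 ^ 2 := by
  exact twist_ideal_square_of_point_general hcf h9.2.1 h9.2.2 hω hxy he hx hae hab
end
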